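/- Assume additionally that for each i ∈ Fin n, P i false + P i true = id, each P i b is idempotent and self-adjoint, and each R i preserves the inner product (is unitary). Then for every ψ ∈ H, ∑_{α : Fin n → Bool} ‖K(α)ψ‖^2 = ‖ψ‖^2. (This expresses that the collapse-model measure μ_c is a normalized classical probability measure: the measures of all cylinder sets of time extent n sum to ‖ψ₀‖² = 1.) -/

import Mathlib

open scoped InnerProductSpace

noncomputable section

/-- Ordered composition `A (n-1) ∘ₗ ⋯ ∘ₗ A 0` of a family of linear maps. -/
def opString {H : Type*} [NormedAddCommGroup H] [InnerProductSpace ℂ H] {n : ℕ}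
    (A : Fin n → (H →ₗ[ℂ] H)) : H →ₗ[ℂ] H :=
  (List.finRange n).foldl (fun acc i => A i ∘ₗ acc) LinearMap.id

/-- The jump (Kraus) operator `J i b = (√(1+X²))⁻¹ • (P i b + X • P i (!b))`. -/
def jumpOp {H : Type*} [NormedAddCommGroup H] [InnerProductSpace ℂ H] {n : ℕ}
    (X : ℝ) (P : Fin n → Bool → (H →ₗ[ℂ] H)) (i : Fin n) (b : Bool) : H →ₗ[ℂ] H :=
  (((Real.sqrt (1 + X ^ 2))⁻¹ : ℝ) : ℂ) • (P i b + (X : ℂ) • P i (!b))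

/-- The Kraus string `K(α) = J (n-1) (α (n-1)) ∘ₗ R (n-1) ∘ₗ ⋯ ∘ₗ J 0 (α 0) ∘ₗ R 0`. -/
def krausString {H : Type*} [NormedAddCommGroup H] [InnerProductSpace ℂ H] {n : ℕ}
    (X : ℝ) (R : Fin n → (H →ₗ[ℂ] H)) (P : Fin n → Bool → (H →ₗ[ℂ] H))
    (α : Fin n → Bool) : H →ₗ[ℂ] H :=
  opString fun i => jumpOp X P i (α i) ∘ₗ R i

theorem opString_succ_last {H : Type*} [NormedAddCommGroup H] [InnerProductSpace ℂ H] {n : ℕ}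
    (A : Fin (n + 1) → (H →ₗ[ℂ] H)) :
    opString A = A (Fin.last n) ∘ₗ opString (fun i : Fin n => A i.castSucc) := by
  simp [opString, List.finRange_succ_last, List.foldl_append, List.foldl_map]

theorem sum_opString_norm_sq {H : Type*} [NormedAddCommGroup H] [InnerProductSpace ℂ H] {n : ℕ}
    (M : Fin n → Bool → (H →ₗ[ℂ] H))
    (hM : ∀ i v, ∑ b : Bool, ‖M i b v‖ ^ 2 = ‖v‖ ^ 2) (ψ : H) :
    ∑ α : Fin n → Bool, ‖opString (fun i => M i (α i)) ψ‖ ^ 2 = ‖ψ‖ ^ 2 := by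
  induction n with
  | zero => simp [opString]
  | succ n ih =>
    rw [← (Fin.snocEquiv (fun _ : Fin (n + 1) => Bool)).sum_comp, Fintype.sum_prod_type_right]
    rw [← ih (fun i => M i.castSucc) (fun i v => hM _ v)]
    refine Finset.sum_congr rfl fun β _ => ?_
    rw [← hM (Fin.last n)]
    refine Finset.sum_congr rfl fun b _ => ?_
    rw [opString_succ_last]
    simp [Fin.snocEquiv]

theorem sum_jumpOp_norm_sq {H : Type*} [NormedAddCommGroup H] [InnerProductSpace ℂ H] {n : ℕ}
    (X : ℝ) (P : Fin n → Bool → (H →ₗ[ℂ] H)) (i : Fin n)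
    (hPsum : P i false + P i true = LinearMap.id)
    (hPidem : ∀ b, P i b ∘ₗ P i b = P i b)
    (hPsa : ∀ b (u v : H), ⟪P i b u, v⟫_ℂ = ⟪u, P i b v⟫_ℂ) (v : H) :
    ∑ b : Bool, ‖jumpOp X P i b v‖ ^ 2 = ‖v‖ ^ 2 := by
  have hs : P i false v + P i true v = v := by
    simpa using congrArg (fun f => f v) hPsum
  have hid : P i true (P i true v) = P i true v := by
    simpa using congrArg (fun f => f v) (hPidem true)
  have h0 : ⟪P i false v, P i true v⟫_ℂ = 0 := by
    have h1 : P i false v = v - P i true v := eq_sub_of_add_eq hs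
    rw [h1, inner_sub_left, hPsa true, hid, sub_self]
  have h0' : ⟪P i true v, P i false v⟫_ℂ = 0 := inner_eq_zero_symm.1 h0
  have pyth : ∀ x y : H, ⟪x, y⟫_ℂ = 0 → ‖x + y‖ ^ 2 = ‖x‖ ^ 2 + ‖y‖ ^ 2 := by
    intro x y h
    have := norm_add_sq_eq_norm_sq_add_norm_sq_of_inner_eq_zero x y h
    nlinarith
  have hv : ‖v‖ ^ 2 = ‖P i false v‖ ^ 2 + ‖P i true v‖ ^ 2 := by
    rw [← pyth _ _ h0, hs]
  have hpos : 0 < 1 + X ^ 2 := by positivity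
  have hc : ((Real.sqrt (1 + X ^ 2))⁻¹) ^ 2 * (1 + X ^ 2) = 1 := by
    rw [inv_pow, Real.sq_sqrt hpos.le, inv_mul_cancel₀ hpos.ne']
  have hn : ∀ (c : ℝ) (x : H), ‖(c : ℂ) • x‖ ^ 2 = c ^ 2 * ‖x‖ ^ 2 := by
    intro c x
    rw [norm_smul, mul_pow, Complex.norm_real, Real.norm_eq_abs, sq_abs]
  rw [Fintype.sum_bool, hv]
  simp only [jumpOp, LinearMap.smul_apply, LinearMap.add_apply, Bool.not_true, Bool.not_false]
  rw [hn, hn, pyth _ _ (by rw [inner_smul_right, h0', mul_zero]),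
    pyth _ _ (by rw [inner_smul_right, h0, mul_zero]), hn, hn]
  linear_combination (‖P i false v‖ ^ 2 + ‖P i true v‖ ^ 2) * hc

/-- The collapse-model measure is a normalized classical probability measure: the measures of
all cylinder sets of time extent `n` sum to `‖ψ₀‖²`. -/
theorem sum_krausString_norm_sq
    {H : Type*} [NormedAddCommGroup H] [InnerProductSpace ℂ H] [FiniteDimensional ℂ H]
    (n : ℕ) (X : ℝ) (hX0 : 0 ≤ X) (hX1 : X ≤ 1)
    (R : Fin n → (H →ₗ[ℂ] H)) (P : Fin n → Bool → (H →ₗ[ℂ] H))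
    (hPsum : ∀ i, P i false + P i true = LinearMap.id)
    (hPidem : ∀ i b, P i b ∘ₗ P i b = P i b)
    (hPsa : ∀ i b (u v : H), ⟪P i b u, v⟫_ℂ = ⟪u, P i b v⟫_ℂ)
    (hR : ∀ i (u v : H), ⟪R i u, R i v⟫_ℂ = ⟪u, v⟫_ℂ)
    (ψ : H) :
    ∑ α : Fin n → Bool, ‖krausString X R P α ψ‖ ^ 2 = ‖ψ‖ ^ 2 := by
  refine sum_opString_norm_sq (fun i b => jumpOp X P i b ∘ₗ R i) (fun i v => ?_) ψ
  have hRn : ‖R i v‖ ^ 2 = ‖v‖ ^ 2 := by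
    have h := hR i v v
    rw [inner_self_eq_norm_sq_to_K, inner_self_eq_norm_sq_to_K] at h
    exact_mod_cast h
  rw [← hRn]
  exact sum_jumpOp_norm_sq X P i (hPsum i) (hPidem i) (hPsa i) (R i v)

end
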